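/- For every ε > 0, the probability under P_3D,q of the set of plane partitions π satisfying |(−ln q)³ · |π| − 2ζ(3)| > ε tends to 0 as q → 1⁻. (That is, (−ln q)³ |π| → 2ζ(3) in probability as q → 1.) -/

import Mathlib

open Filter Topology
open scoped Classical

/-- A plane partition: an array `(π_{ij})_{i,j ≥ 1}` of nonnegative integers,
nonincreasing in `i` and in `j`, with finitely many nonzero entries.
`part i j` is the entry `π_{i+1, j+1}`. -/
structure PlanePartition : Type where
  part : ℕ → ℕ → ℕ
  antitone_fst : ∀ ⦃i i' : ℕ⦄ (j : ℕ), i ≤ i' → part i' j ≤ part i j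
  antitone_snd : ∀ (i : ℕ) ⦃j j' : ℕ⦄, j ≤ j' → part i j' ≤ part i j
  finite_support : (Function.support fun p : ℕ × ℕ => part p.1 p.2).Finite

/-- The volume `|π| = Σ_{i,j} π_{ij}` of a plane partition. -/
noncomputable def PlanePartition.size (π : PlanePartition) : ℕ :=
  ∑' p : ℕ × ℕ, π.part p.1 p.2

namespace PPaux
open scoped ENNReal

/-- interlacing: `k ≺ l` -/
def Il (k l : ℕ →₀ ℕ) : Prop := ∀ i, k i ≤ l i ∧ l (i + 1) ≤ k i

/-- size of a (finitely supported) sequence -/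
noncomputable def sz (k : ℕ →₀ ℕ) : ℕ := k.sum fun _ x => x

lemma sz_eq (k : ℕ →₀ ℕ) (n : ℕ) (h : ∀ i, n ≤ i → k i = 0) :
    sz k = ∑ i ∈ Finset.range n, k i := by
  unfold sz
  apply Finsupp.sum_of_support_subset
  · intro i hi
    rw [Finset.mem_range]
    by_contra hc
    exact (Finsupp.mem_support_iff.1 hi) (h i (not_lt.1 hc))
  · simp

lemma exists_bd (k : ℕ →₀ ℕ) : ∃ n, ∀ m, n ≤ m → ∀ i, m ≤ i → k i = 0 := by
  refine ⟨k.support.sup id + 1, fun m hm i hi => ?_⟩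
  by_contra hc
  have : i ≤ k.support.sup id :=
    Finset.le_sup (f := id) (Finsupp.mem_support_iff.2 hc)
  omega

/-- the toggle -/
noncomputable def tog (l m v : ℕ →₀ ℕ) : ℕ →₀ ℕ :=
  Finsupp.ofSupportFinite
    (fun i => if l i = 0 then 0 else max (l (i+1)) (m (i+1)) + min (l i) (m i) - v (i+1))
    (l.hasFiniteSupport.subset (by
      intro i hi
      simp only [Function.mem_support, ne_eq, ite_eq_left_iff, Classical.not_imp] at hi
      exact hi.1))

lemma tog_apply {l m v : ℕ →₀ ℕ} (hl : Il l v) (hm : Il m v) (i : ℕ) :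
    tog l m v i + v (i+1) = max (l (i+1)) (m (i+1)) + min (l i) (m i) := by
  have h1 := hl i; have h2 := hm i; have h3 := hl (i+1); have h4 := hm (i+1)
  change (if l i = 0 then 0 else max (l (i+1)) (m (i+1)) + min (l i) (m i) - v (i+1)) + _ = _
  split_ifs <;> omega

lemma tog_il {l m v : ℕ →₀ ℕ} (hl : Il l v) (hm : Il m v) :
    Il (tog l m v) l ∧ Il (tog l m v) m := by
  constructor <;> intro i <;>
  · have h1 := hl i; have h2 := hm i; have h3 := hl (i+1); have h4 := hm (i+1)
    have := tog_apply hl hm i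
    omega

lemma tog_size {l m v : ℕ →₀ ℕ} (hl : Il l v) (hm : Il m v) :
    sz (tog l m v) + sz v = sz l + sz m + (v 0 - max (l 0) (m 0)) := by
  obtain ⟨a, ha⟩ := exists_bd l
  obtain ⟨b, hb⟩ := exists_bd m
  obtain ⟨c, hc⟩ := exists_bd v
  obtain ⟨d, hd⟩ := exists_bd (tog l m v)
  set n := a + b + c + d
  rw [sz_eq (tog l m v) n (hd n (by omega)), sz_eq v (n+1) (hc (n+1) (by omega)),
    sz_eq l n (ha n (by omega)), sz_eq m n (hb n (by omega))]
  have key : ∀ k, ∑ i ∈ Finset.range k, tog l m v i + ∑ i ∈ Finset.range (k+1), v i =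
      ∑ i ∈ Finset.range k, l i + ∑ i ∈ Finset.range k, m i + (v 0 - max (l 0) (m 0))
        + max (l k) (m k) := by
    intro k
    induction k with
    | zero =>
      have h1 := hl 0; have h2 := hm 0
      simp; omega
    | succ k ih =>
      rw [Finset.sum_range_succ _ (k+1), Finset.sum_range_succ (fun i => tog l m v i) k,
        Finset.sum_range_succ (fun i => l i) k, Finset.sum_range_succ (fun i => m i) k]
      have := tog_apply hl hm k
      omega
  rw [key n, ha n (by omega) n le_rfl, hb n (by omega) n le_rfl]
  simp

lemma il_sz {k l : ℕ →₀ ℕ} (h : Il k l) : sz k ≤ sz l := by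
  obtain ⟨a, ha⟩ := exists_bd k
  obtain ⟨b, hb⟩ := exists_bd l
  rw [sz_eq k (a+b) (ha _ (by omega)), sz_eq l (a+b) (hb _ (by omega))]
  exact Finset.sum_le_sum fun i _ => (h i).1

/-- local inequality -/
lemma local_ineq (x y : ℝ≥0∞) (l m : ℕ →₀ ℕ) :
    ∑' v : ℕ →₀ ℕ, (if Il l v ∧ Il m v then x ^ (sz v - sz l) * y ^ (sz v - sz m) else 0) ≤
    (1 - x * y)⁻¹ * ∑' k : ℕ →₀ ℕ,
      (if Il k l ∧ Il k m then x ^ (sz m - sz k) * y ^ (sz l - sz k) else 0) := by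
  rw [← ENNReal.tsum_geometric, ← ENNReal.tsum_mul_right]
  simp_rw [← ENNReal.tsum_mul_left]
  rw [← ENNReal.tsum_prod (f := fun (n : ℕ) (k : ℕ →₀ ℕ) => (x*y)^n *
    (if Il k l ∧ Il k m then x ^ (sz m - sz k) * y ^ (sz l - sz k) else 0))]
  have e : ∑' v : ℕ →₀ ℕ, (if Il l v ∧ Il m v then x ^ (sz v - sz l) * y ^ (sz v - sz m) else 0)
     = ∑' v : {v : ℕ →₀ ℕ | Il l v ∧ Il m v}, x ^ (sz v.1 - sz l) * y ^ (sz v.1 - sz m) := by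
    rw [tsum_subtype {v : ℕ →₀ ℕ | Il l v ∧ Il m v}
      (fun v => x ^ (sz v - sz l) * y ^ (sz v - sz m))]
    apply tsum_congr
    intro v
    simp [Set.indicator_apply]
  rw [e]
  let F : {v : ℕ →₀ ℕ | Il l v ∧ Il m v} → ℕ × (ℕ →₀ ℕ) := fun v =>
    (v.1 0 - max (l 0) (m 0), tog l m v.1)
  have hF : Function.Injective F := by
    rintro ⟨v, hv⟩ ⟨w, hw⟩ h
    simp only [F, Prod.mk.injEq] at h
    obtain ⟨h1, h2⟩ := h
    ext i
    rcases i with _ | i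
    · have a1 := hv.1 0; have a2 := hv.2 0; have a3 := hw.1 0; have a4 := hw.2 0
      simp only; omega
    · have a1 := tog_apply hv.1 hv.2 i
      have a2 := tog_apply hw.1 hw.2 i
      rw [h2] at a1
      simp only; omega
  refine le_trans (le_of_eq ?_) (ENNReal.tsum_comp_le_tsum_of_injective hF _)
  apply tsum_congr
  rintro ⟨v, hv⟩
  have h1 := tog_il hv.1 hv.2
  have h2 := tog_size hv.1 hv.2
  have h3 := il_sz h1.1
  have h4 := il_sz h1.2
  have h5 := il_sz hv.1
  have h6 := il_sz hv.2
  simp only [F, h1, and_self, if_true]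
  rw [mul_pow, mul_mul_mul_comm, ← pow_add, ← pow_add]
  congr 2 <;> omega

/-- half generating function -/
noncomputable def S (q : ℝ≥0∞) : ℕ → ℕ → (ℕ →₀ ℕ) → ℝ≥0∞
  | 0, _, l => if l = 0 then 1 else 0
  | N+1, a, l => ∑' k, if Il k l then (q^a) ^ (sz l - sz k) * S q N (a+1) k else 0

lemma il_zero {k : ℕ →₀ ℕ} : Il k 0 ↔ k = 0 := by
  constructor
  · intro h; ext i; have := (h i).1; simpa using this
  · rintro rfl i; simp

/-- down operator -/
noncomputable def D (y : ℝ≥0∞) (g : (ℕ →₀ ℕ) → ℝ≥0∞) (l : ℕ →₀ ℕ) : ℝ≥0∞ :=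
  ∑' k, if Il k l then y ^ (sz l - sz k) * g k else 0

/-- up operator -/
noncomputable def U (x : ℝ≥0∞) (g : (ℕ →₀ ℕ) → ℝ≥0∞) (l : ℕ →₀ ℕ) : ℝ≥0∞ :=
  ∑' k, if Il l k then x ^ (sz k - sz l) * g k else 0

lemma D_zero (y : ℝ≥0∞) (g) : D y g 0 = g 0 := by
  unfold D
  rw [tsum_eq_single 0]
  · simp [il_zero]
  · intro b hb; simp [il_zero, hb]

lemma UD (x y : ℝ≥0∞) (g) (l) : U x (D y g) l ≤ (1 - x*y)⁻¹ * D y (U x g) l := by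
  have e1 : U x (D y g) l = ∑' m, g m * ∑' v,
      (if Il l v ∧ Il m v then x ^ (sz v - sz l) * y ^ (sz v - sz m) else 0) := by
    unfold U D
    simp_rw [← ENNReal.tsum_mul_left]
    rw [ENNReal.tsum_comm]
    apply tsum_congr; intro v
    split_ifs with h
    · apply tsum_congr; intro m
      simp only [h, true_and]
      split_ifs
      · ring
      · simp
    · simp [h]
  have e2 : D y (U x g) l = ∑' m, g m * ∑' k,
      (if Il k l ∧ Il k m then x ^ (sz m - sz k) * y ^ (sz l - sz k) else 0) := by
    unfold U D
    simp_rw [← ENNReal.tsum_mul_left]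
    rw [ENNReal.tsum_comm]
    apply tsum_congr; intro v
    split_ifs with h
    · apply tsum_congr; intro m
      simp only [h, true_and]
      split_ifs
      · ring
      · simp
    · simp [h]
  rw [e1, e2, ← ENNReal.tsum_mul_left]
  apply ENNReal.tsum_le_tsum
  intro m
  calc _ ≤ g m * _ := mul_le_mul_right (local_ineq x y l m) _
    _ = _ := by ring

lemma S_pair (q : ℝ≥0∞) (N a : ℕ) (g) :
    ∑' l, S q (N+1) a l * g l = ∑' k, S q N (a+1) k * U (q^a) g k := by
  unfold U
  simp_rw [← ENNReal.tsum_mul_left]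
  rw [ENNReal.tsum_comm]
  apply tsum_congr; intro l
  rw [S, ← ENNReal.tsum_mul_right]
  apply tsum_congr; intro k
  split_ifs
  · ring
  · simp

lemma S_D (q y : ℝ≥0∞) (N : ℕ) : ∀ (a : ℕ) (g), ∑' l, S q N a l * D y g l ≤
    (∏ i ∈ Finset.range N, (1 - q^(a+i) * y)⁻¹) * ∑' l, S q N a l * g l := by
  induction N with
  | zero =>
    intro a g
    simp only [S, Finset.range_zero, Finset.prod_empty, one_mul]
    rw [tsum_eq_single 0, tsum_eq_single 0]
    · simp [D_zero]
    · intro b hb; simp [hb]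
    · intro b hb; simp [hb]
  | succ N ih =>
    intro a g
    rw [S_pair, S_pair, Finset.prod_range_succ']
    calc _ ≤ ∑' k, S q N (a+1) k * ((1 - q^a*y)⁻¹ * D y (U (q^a) g) k) :=
          ENNReal.tsum_le_tsum fun k => mul_le_mul_right (UD _ _ _ _) _
      _ = (1 - q^a*y)⁻¹ * ∑' k, S q N (a+1) k * D y (U (q^a) g) k := by
          rw [← ENNReal.tsum_mul_left]
          apply tsum_congr; intro k; ring
      _ ≤ (1 - q^a*y)⁻¹ * _ := mul_le_mul_right (ih _ _) _
      _ = _ := by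
          rw [← mul_assoc, mul_comm (1 - q^a*y)⁻¹]
          simp only [add_zero, add_assoc, add_comm 1]

lemma S_at_zero (q : ℝ≥0∞) (N : ℕ) : ∀ a, S q N a 0 = 1 := by
  induction N with
  | zero => intro a; simp [S]
  | succ N ih =>
    intro a
    have := D_zero (q^a) (S q N (a+1))
    rw [ih] at this
    exact this

lemma cauchy (q : ℝ≥0∞) (N M : ℕ) : ∀ (a b : ℕ), ∑' l, S q N a l * S q M b l ≤
    ∏ j ∈ Finset.range M, ∏ i ∈ Finset.range N, (1 - q^(a+b+i+j))⁻¹ := by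
  induction M with
  | zero =>
    intro a b
    rw [tsum_eq_single 0]
    · simp [S_at_zero]
    · intro l hl; simp [S, hl]
  | succ M ih =>
    intro a b
    have := S_D q (q^b) N a (S q M (b+1))
    refine le_trans this (le_trans (mul_le_mul_right (ih a (b+1)) _) (le_of_eq ?_))
    rw [Finset.prod_range_succ', mul_comm]
    congr 1
    · apply Finset.prod_congr rfl; intro j _
      apply Finset.prod_congr rfl; intro i _
      congr 3; ring
    · apply Finset.prod_congr rfl; intro i _
      rw [← pow_add]; congr 3; ring

/-- chains -/
def Ch (N : ℕ) (l : ℕ →₀ ℕ) : Set (ℕ → ℕ →₀ ℕ) :=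
  {c | c 0 = l ∧ (∀ i, Il (c (i+1)) (c i)) ∧ ∀ i, N ≤ i → c i = 0}

lemma chain_le (q : ℝ≥0∞) (N : ℕ) : ∀ (a : ℕ) (l),
    ∑' c : Ch N l, q ^ (a * sz l + ∑ i ∈ Finset.range N, sz (c.1 (i+1))) ≤ S q N a l := by
  induction N with
  | zero =>
    intro a l
    simp only [S]
    split_ifs with h
    · subst h
      rw [tsum_eq_single ⟨fun _ => 0, rfl, fun i => il_zero.2 rfl, fun _ _ => rfl⟩]
      · simp [sz]
      · rintro ⟨c, hc⟩ h
        exfalso; apply h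
        ext i : 2
        exact hc.2.2 i (Nat.zero_le _)
    · have : IsEmpty (Ch 0 l) := ⟨fun c => h (by rw [← c.2.1]; exact c.2.2.2 0 le_rfl)⟩
      simp
  | succ N ih =>
    intro a l
    simp only [S]
    have e : ∀ k, (∑' c : {c : Ch N k | Il k l}, (q^a)^(sz l - sz k) *
          q ^ ((a+1) * sz k + ∑ i ∈ Finset.range N, sz (c.1.1 (i+1)))) ≤
        if Il k l then (q^a) ^ (sz l - sz k) * S q N (a+1) k else 0 := by
      intro k
      rw [ENNReal.tsum_mul_left]
      split_ifs with h
      · apply mul_le_mul_right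
        refine le_trans ?_ (ih (a+1) k)
        exact ENNReal.tsum_comp_le_tsum_of_injective
          (f := fun c : {c : Ch N k | Il k l} => c.1) Subtype.val_injective _
      · have : IsEmpty {c : Ch N k | Il k l} := ⟨fun c => h c.2⟩
        simp
    refine le_trans ?_ (ENNReal.tsum_le_tsum e)
    rw [← ENNReal.tsum_sigma]
    let F : Ch (N+1) l → (Σ k, {c : Ch N k | Il k l}) := fun c =>
      ⟨c.1 1, ⟨⟨fun i => c.1 (i+1), rfl, fun i => c.2.2.1 (i+1),
        fun i hi => c.2.2.2 (i+1) (by omega)⟩, by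
          have := c.2.2.1 0
          rw [c.2.1] at this
          exact this⟩⟩
    let G : (Σ k, {c : Ch N k | Il k l}) → (ℕ → ℕ →₀ ℕ) := fun x => x.2.1.1
    have hF : Function.Injective F := by
      rintro ⟨c, hc⟩ ⟨d, hd⟩ h
      have h2 : G (F ⟨c, hc⟩) = G (F ⟨d, hd⟩) := by rw [h]
      ext i : 2
      rcases i with _ | i
      · exact hc.1.trans hd.1.symm
      · exact congrFun h2 i
    refine le_trans (le_of_eq ?_) (ENNReal.tsum_comp_le_tsum_of_injective hF _)
    apply tsum_congr
    rintro ⟨c, hc⟩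
    have h1 : sz (c 1) ≤ sz l := by
      have := hc.2.1 0
      rw [hc.1] at this
      exact il_sz this
    simp only [F]
    rw [← pow_mul, ← pow_add, Finset.sum_range_succ']
    congr 1
    obtain ⟨d, hd⟩ := Nat.exists_eq_add_of_le h1
    rw [hd]
    simp only [zero_add, Nat.add_sub_cancel_left]
    ring

end PPaux
namespace PPaux
open scoped ENNReal

/-- right diagonals -/
noncomputable def diagR (π : PlanePartition) (i : ℕ) : ℕ →₀ ℕ :=
  Finsupp.ofSupportFinite (fun t => π.part t (t+i))
    (π.finite_support.preimage (f := fun t => (t, t+i))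
      (by intro a _ b _ h; exact (Prod.mk.inj h).1))

/-- left diagonals -/
noncomputable def diagL (π : PlanePartition) (i : ℕ) : ℕ →₀ ℕ :=
  Finsupp.ofSupportFinite (fun t => π.part (t+i) t)
    (π.finite_support.preimage (f := fun t => (t+i, t))
      (by intro a _ b _ h; exact (Prod.mk.inj h).2))

lemma diagR_apply (π : PlanePartition) (i t : ℕ) : diagR π i t = π.part t (t+i) := rfl
lemma diagL_apply (π : PlanePartition) (i t : ℕ) : diagL π i t = π.part (t+i) t := rfl

lemma diagR_il (π : PlanePartition) (i : ℕ) : Il (diagR π (i+1)) (diagR π i) := by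
  intro t
  simp only [diagR_apply]
  refine ⟨π.antitone_snd _ (by omega), ?_⟩
  have := π.antitone_fst (t + (i+1)) (show t ≤ t + 1 by omega)
  rwa [show t + (i+1) = t + 1 + i by ring] at *

lemma diagL_il (π : PlanePartition) (i : ℕ) : Il (diagL π (i+1)) (diagL π i) := by
  intro t
  simp only [diagL_apply]
  refine ⟨π.antitone_fst _ (by omega), ?_⟩
  have := π.antitone_snd (t + (i+1)) (show t ≤ t + 1 by omega)
  rwa [show t + (i+1) = t + 1 + i by ring] at *

/-- contained in a box -/
def Box (N : ℕ) : Set PlanePartition :=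
  {π | ∀ i j, (N ≤ i ∨ N ≤ j) → π.part i j = 0}

lemma box_exists (F : Finset PlanePartition) : ∃ N, ∀ π ∈ F, π ∈ Box N := by
  have h1 : ∀ π : PlanePartition, ∃ N, π ∈ Box N := by
    intro π
    refine ⟨π.finite_support.toFinset.sup (fun p => p.1 + p.2) + 1, fun i j h => ?_⟩
    by_contra hc
    have : i + j ≤ π.finite_support.toFinset.sup (fun p => p.1 + p.2) :=
      Finset.le_sup (f := fun p : ℕ × ℕ => p.1 + p.2) (b := (i,j)) (by simpa using hc)
    omega
  choose n hn using h1
  refine ⟨F.sup n, fun π hπ i j h => hn π i j ?_⟩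
  have : n π ≤ F.sup n := Finset.le_sup hπ
  omega

lemma size_ge (π : PlanePartition) (N : ℕ) (h : π ∈ Box N) :
    (1 * sz (diagR π 0) + ∑ i ∈ Finset.range N, sz (diagR π (i+1))) +
    (0 * sz (diagR π 0) + ∑ i ∈ Finset.range N, sz (diagL π (i+1))) ≤ π.size := by
  have hR : ∀ i, sz (diagR π i) = ∑ t ∈ Finset.range N, π.part t (t+i) := fun i =>
    sz_eq _ N fun t ht => h _ _ (Or.inl ht)
  have hL : ∀ i, sz (diagL π i) = ∑ t ∈ Finset.range N, π.part (t+i) t := fun i =>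
    sz_eq _ N fun t ht => h _ _ (Or.inr ht)
  have e1 : 1 * sz (diagR π 0) + ∑ i ∈ Finset.range N, sz (diagR π (i+1)) =
      ∑ p ∈ ((Finset.range (N+1)) ×ˢ (Finset.range N)).image (fun p => (p.2, p.2 + p.1)),
        π.part p.1 p.2 := by
    rw [Finset.sum_image, Finset.sum_product, Finset.sum_range_succ', one_mul, add_comm, hR]
    · simp only [hR]
    · rintro ⟨a, b⟩ _ ⟨c, d⟩ _ h
      simp only [Prod.mk.injEq] at h ⊢
      omega
  have e2 : 0 * sz (diagR π 0) + ∑ i ∈ Finset.range N, sz (diagL π (i+1)) =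
      ∑ p ∈ ((Finset.range N) ×ˢ (Finset.range N)).image (fun p => (p.2 + (p.1 + 1), p.2)),
        π.part p.1 p.2 := by
    rw [Finset.sum_image, Finset.sum_product, zero_mul, zero_add]
    · simp only [hL]
    · rintro ⟨a, b⟩ _ ⟨c, d⟩ _ h
      simp only [Prod.mk.injEq] at h ⊢
      omega
  rw [e1, e2, ← Finset.sum_union]
  · unfold PlanePartition.size
    apply Summable.sum_le_tsum _ (fun _ _ => Nat.zero_le _)
    exact summable_of_hasFiniteSupport π.finite_support
  · rw [Finset.disjoint_left]
    intro p hp hq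
    simp only [Finset.mem_image] at hp hq
    obtain ⟨a, _, rfl⟩ := hp
    obtain ⟨b, _, hb⟩ := hq
    simp only [Prod.mk.injEq] at hb
    omega

lemma box_sum (q : ℝ≥0∞) (hq : q ≤ 1) (N : ℕ) :
    ∑' π : Box N, q ^ π.1.size ≤
      ∏ j ∈ Finset.range N, ∏ i ∈ Finset.range N, (1 - q^(i+j+1))⁻¹ := by
  have hc := cauchy q N N 1 0
  refine le_trans ?_ (le_trans hc (le_of_eq ?_))
  swap
  · apply Finset.prod_congr rfl; intro j _
    apply Finset.prod_congr rfl; intro i _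
    congr 3; ring
  refine le_trans ?_ (ENNReal.tsum_le_tsum fun l =>
    mul_le_mul' (chain_le q N 1 l) (chain_le q N 0 l))
  simp_rw [← ENNReal.tsum_mul_right, ← ENNReal.tsum_mul_left]
  have : ∀ l : ℕ →₀ ℕ, ∑' (c : Ch N l) (d : Ch N l),
      q ^ (1 * sz l + ∑ i ∈ Finset.range N, sz (c.1 (i+1))) *
      q ^ (0 * sz l + ∑ i ∈ Finset.range N, sz (d.1 (i+1))) =
      ∑' x : Ch N l × Ch N l, q ^ (1 * sz l + ∑ i ∈ Finset.range N, sz (x.1.1 (i+1))) *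
      q ^ (0 * sz l + ∑ i ∈ Finset.range N, sz (x.2.1 (i+1))) := by
    intro l
    rw [ENNReal.tsum_prod']
  simp_rw [this]
  rw [← ENNReal.tsum_sigma]
  let F : Box N → Σ l, Ch N l × Ch N l := fun π =>
    ⟨diagR π.1 0, ⟨⟨diagR π.1, rfl, diagR_il π.1, fun i hi => by
        ext t; exact π.2 _ _ (Or.inr (by omega))⟩,
      ⟨diagL π.1, rfl, diagL_il π.1, fun i hi => by
        ext t; exact π.2 _ _ (Or.inl (by omega))⟩⟩⟩
  let G : (Σ l, Ch N l × Ch N l) → (ℕ → ℕ →₀ ℕ) × (ℕ → ℕ →₀ ℕ) := fun x => (x.2.1.1, x.2.2.1)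
  have hF : Function.Injective F := by
    intro a b h
    have h2 : G (F a) = G (F b) := by rw [h]
    have h3 : diagR a.1 = diagR b.1 := congrArg Prod.fst h2
    have h4 : diagL a.1 = diagL b.1 := congrArg Prod.snd h2
    have h5 : a.1.part = b.1.part := by
      funext i j
      rcases le_total i j with hij | hij
      · obtain ⟨d, rfl⟩ := Nat.exists_eq_add_of_le hij
        rw [← diagR_apply, ← diagR_apply, h3]
      · obtain ⟨d, rfl⟩ := Nat.exists_eq_add_of_le hij
        rw [← diagL_apply, ← diagL_apply, h4]
    apply Subtype.ext
    revert h5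
    generalize a.1 = a
    generalize b.1 = b
    rcases a with ⟨a, _, _, _⟩
    rcases b with ⟨b, _, _, _⟩
    rintro h
    simp only at h
    subst h
    rfl
  refine le_trans ?_ (ENNReal.tsum_comp_le_tsum_of_injective hF _)
  apply ENNReal.tsum_le_tsum
  intro π
  simp only [F]
  rw [← pow_add]
  exact pow_le_pow_right_of_le_one' hq (size_ge π.1 N π.2)

lemma total_sum (q B : ℝ≥0∞) (hq : q ≤ 1)
    (hB : ∀ N, ∏ j ∈ Finset.range N, ∏ i ∈ Finset.range N, (1 - q^(i+j+1))⁻¹ ≤ B) :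
    ∑' π : PlanePartition, q ^ π.size ≤ B := by
  rw [ENNReal.tsum_eq_iSup_sum]
  apply iSup_le
  intro F
  obtain ⟨N, hN⟩ := box_exists F
  refine le_trans ?_ (le_trans (box_sum q hq N) (hB N))
  rw [tsum_subtype (Box N) (fun π => q ^ π.size)]
  refine le_trans (le_of_eq ?_) (ENNReal.sum_le_tsum F)
  apply Finset.sum_congr rfl
  intro π hπ
  rw [Set.indicator_of_mem (hN π hπ)]

/-- the exponent -/
noncomputable def L (q : ℝ) : ℝ := ∑' n : ℕ, ((n:ℝ)+1) * (-Real.log (1 - q^(n+1)))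

/-- minus log -/
noncomputable def g (q : ℝ) (n : ℕ) : ℝ := -Real.log (1 - q^(n+1))

lemma qpow {q : ℝ} (h0 : 0 < q) (h1 : q < 1) (n : ℕ) : 0 < q^(n+1) ∧ q^(n+1) < 1 :=
  ⟨by positivity, pow_lt_one₀ h0.le h1 (by omega)⟩

lemma g_nonneg {q : ℝ} (h0 : 0 < q) (h1 : q < 1) (n : ℕ) : 0 ≤ g q n := by
  have := qpow h0 h1 n
  unfold g
  have := Real.log_nonpos (x := 1 - q^(n+1)) (by linarith) (by linarith)
  linarith

lemma box_g {q : ℝ} (h0 : 0 < q) (h1 : q < 1)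
    (hs : Summable fun n : ℕ => ((n:ℝ)+1) * (-Real.log (1 - q^(n+1)))) (N : ℕ) :
    ∑ j ∈ Finset.range N, ∑ i ∈ Finset.range N, g q (i+j) ≤ L q := by
  rw [← Finset.sum_product' (Finset.range N) (Finset.range N) (fun j i => g q (i+j))]
  have hg := g_nonneg h0 h1
  have e : ∑ n ∈ Finset.range (2*N), ∑ p ∈ Finset.HasAntidiagonal.antidiagonal n, g q (p.2 + p.1) =
      ∑ n ∈ Finset.range (2*N), ((n:ℝ)+1) * g q n := by
    apply Finset.sum_congr rfl; intro n _
    rw [Finset.sum_congr rfl (g := fun _ => g q n)]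
    · simp
    · intro p hp
      rw [add_comm, Finset.HasAntidiagonal.mem_antidiagonal.1 hp]
  calc _ ≤ ∑ p ∈ (Finset.range (2*N)).biUnion (fun n => Finset.HasAntidiagonal.antidiagonal n),
          g q (p.2 + p.1) := by
        apply Finset.sum_le_sum_of_subset_of_nonneg
        · rintro ⟨a, b⟩ h
          simp only [Finset.mem_product, Finset.mem_range, Finset.mem_biUnion,
            Finset.HasAntidiagonal.mem_antidiagonal] at *
          exact ⟨a+b, by omega, rfl⟩
        · intros; exact hg _
    _ = ∑ n ∈ Finset.range (2*N), ((n:ℝ)+1) * g q n := by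
        rw [Finset.sum_biUnion, e]
        intro a _ b _ hab
        simp only [Function.onFun]
        rw [Finset.disjoint_left]
        intro p hp hq
        rw [Finset.HasAntidiagonal.mem_antidiagonal] at hp hq
        exact hab (hp.symm.trans hq)
    _ ≤ L q := hs.sum_le_tsum _ (fun n _ => mul_nonneg (by positivity) (hg n))

lemma Z_le {q : ℝ} (h0 : 0 < q) (h1 : q < 1)
    (hs : Summable fun n : ℕ => ((n:ℝ)+1) * (-Real.log (1 - q^(n+1)))) :
    Summable (fun π : PlanePartition => q ^ π.size) ∧
      ∑' π : PlanePartition, q ^ π.size ≤ Real.exp (L q) := by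
  have key : ∑' π : PlanePartition, ENNReal.ofReal (q ^ π.size) ≤
      ENNReal.ofReal (Real.exp (L q)) := by
    simp_rw [ENNReal.ofReal_pow h0.le]
    apply total_sum
    · exact ENNReal.ofReal_le_one.2 h1.le
    · intro N
      have : ∀ i j : ℕ, (1 - ENNReal.ofReal q ^ (i+j+1))⁻¹ =
          ENNReal.ofReal (Real.exp (g q (i+j))) := by
        intro i j
        have := qpow h0 h1 (i+j)
        rw [g, Real.exp_neg, Real.exp_log (by linarith), ENNReal.ofReal_inv_of_pos (by linarith),
          ENNReal.ofReal_sub _ this.1.le, ENNReal.ofReal_one, ENNReal.ofReal_pow h0.le]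
      simp_rw [this]
      simp_rw [← ENNReal.ofReal_prod_of_nonneg (fun i _ => (Real.exp_pos _).le),
        ← Real.exp_sum]
      rw [← ENNReal.ofReal_prod_of_nonneg (fun i _ => (Real.exp_pos _).le), ← Real.exp_sum]
      exact ENNReal.ofReal_le_ofReal (Real.exp_le_exp.2 (box_g h0 h1 hs N))
  have hnn : ∀ π : PlanePartition, 0 ≤ q ^ π.size := fun π => by positivity
  have hsum : Summable (fun π : PlanePartition => q ^ π.size) := by
    have := ENNReal.summable_toReal (ne_top_of_le_ne_top ENNReal.ofReal_ne_top key)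
    refine this.congr fun π => ENNReal.toReal_ofReal (hnn π)
  refine ⟨hsum, ?_⟩
  rw [← ENNReal.ofReal_tsum_of_nonneg hnn hsum] at key
  exact (ENNReal.ofReal_le_ofReal_iff (Real.exp_pos _).le).1 key

lemma prod_eq {q : ℝ} (h0 : 0 < q) (h1 : q < 1)
    (hs : Summable fun n : ℕ => ((n:ℝ)+1) * (-Real.log (1 - q^(n+1)))) :
    ∏' n : ℕ, (1 - q ^ (n + 1)) ^ (n + 1) = Real.exp (-L q) := by
  have h := hs.hasSum.neg.rexp
  refine HasProd.tprod_eq ?_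
  have e : (fun n : ℕ => (1 - q ^ (n + 1)) ^ (n + 1)) =
      (Real.exp ∘ fun b : ℕ => -(((b:ℝ) + 1) * -Real.log (1 - q ^ (b + 1)))) := ?_
  · rw [e]; exact h
  funext n
  have := qpow h0 h1 n
  simp only [Function.comp]
  rw [show -(((n:ℝ)+1) * -Real.log (1 - q^(n+1))) = ((n+1 : ℕ):ℝ) * Real.log (1 - q^(n+1)) by
    push_cast; ring, Real.exp_nat_mul, Real.exp_log (by linarith)]

end PPaux
namespace PPaux

/-- x^2 e^{-x}/(1-e^{-x})^2 -/
noncomputable def ph (x : ℝ) : ℝ := x^2 * (Real.exp (-x) / (1 - Real.exp (-x))^2)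

lemma ph_nonneg (x : ℝ) : 0 ≤ ph x := by unfold ph; positivity

lemma ph_le_one {x : ℝ} (hx : 0 < x) : ph x ≤ 1 := by
  have h1 : Real.exp (-x) < 1 := by rw [Real.exp_lt_one_iff]; linarith
  have h2 : x * Real.exp (-(x/2)) ≤ 1 - Real.exp (-x) := by
    have := Real.self_le_sinh_iff.2 (show 0 ≤ x/2 by linarith)
    rw [Real.sinh_eq] at this
    have e1 : Real.exp (x/2) * Real.exp (-(x/2)) = 1 := by rw [← Real.exp_add]; simp
    have e2 : Real.exp (-(x/2)) * Real.exp (-(x/2)) = Real.exp (-x) := by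
      rw [← Real.exp_add]; congr 1; ring
    have h3 : x ≤ Real.exp (x/2) - Real.exp (-(x/2)) := by linarith
    have := mul_le_mul_of_nonneg_right h3 (Real.exp_pos (-(x/2))).le
    rw [sub_mul, e1, e2] at this
    exact this
  unfold ph
  rw [← mul_div_assoc, div_le_one (by have : 0 < 1 - Real.exp (-x) := by linarith
                                      positivity)]
  have e2 : Real.exp (-x) = Real.exp (-(x/2)) ^ 2 := by
      rw [← Real.exp_nat_mul]; congr 1; push_cast; ring
  calc x^2 * Real.exp (-x) = (x * Real.exp (-(x/2)))^2 := by rw [e2]; ring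
    _ ≤ _ := pow_le_pow_left₀ (by positivity) h2 2

lemma ph_tendsto : Tendsto ph (𝓝[>] 0) (𝓝 1) := by
  have hd : HasDerivAt (fun x : ℝ => 1 - Real.exp (-x)) 1 0 := by
    have := ((hasDerivAt_id (0:ℝ)).neg.exp).const_sub 1
    simpa using this
  have h1 : Tendsto (fun x : ℝ => x⁻¹ * (1 - Real.exp (-x))) (𝓝[>] 0) (𝓝 1) := by
    have := hd.tendsto_slope_zero_right
    simpa using this
  have h2 : Tendsto (fun x : ℝ => Real.exp (-x)) (𝓝[>] 0) (𝓝 1) := by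
    have : Continuous (fun x : ℝ => Real.exp (-x)) := by fun_prop
    have := (this.tendsto 0).mono_left (nhdsWithin_le_nhds (s := Set.Ioi 0))
    simpa using this
  have h3 := h2.div (h1.pow 2) (by norm_num)
  rw [one_pow, div_one] at h3
  refine h3.congr' ?_
  filter_upwards [self_mem_nhdsWithin] with x hx
  have hx : x ≠ 0 := ne_of_gt hx
  simp only [Pi.div_apply, ph]
  field_simp

lemma inner_sum {x : ℝ} (hx : 0 < x) :
    HasSum (fun n : ℕ => ((n:ℝ)+1) * Real.exp (-x)^(n+1)) (ph x / x^2) := by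
  have h1 : Real.exp (-x) < 1 := by rw [Real.exp_lt_one_iff]; linarith
  have h := hasSum_coe_mul_geometric_of_norm_lt_one (r := Real.exp (-x))
    (by rwa [Real.norm_eq_abs, abs_of_pos (Real.exp_pos _)])
  have := (hasSum_nat_add_iff' 1).2 h
  have e : ph x / x^2 = Real.exp (-x) / (1 - Real.exp (-x))^2 := by
    unfold ph; field_simp
  rw [e]
  simpa using this

lemma zeta_sum : Summable (fun k : ℕ => ((k:ℝ)+1)⁻¹^3) := by
  have := (summable_nat_add_iff 1).2 (Real.summable_nat_pow_inv (p := 3).2 (by norm_num))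
  refine this.congr fun k => ?_
  push_cast; rw [inv_pow]

lemma L_main {r : ℝ} (hr : 0 < r) :
    (Summable fun n : ℕ => ((n:ℝ)+1) * (-Real.log (1 - Real.exp (-r)^(n+1)))) ∧
    r^2 * L (Real.exp (-r)) = ∑' k : ℕ, ((k:ℝ)+1)⁻¹^3 * ph (((k:ℝ)+1) * r) := by
  have hq0 := Real.exp_pos (-r)
  have hq1 : Real.exp (-r) < 1 := by rw [Real.exp_lt_one_iff]; linarith
  let f : ℕ × ℕ → ℝ := fun p => ((p.2:ℝ)+1) * (Real.exp (-r)^(p.2+1))^(p.1+1) / ((p.1:ℝ)+1)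
  have hf0 : 0 ≤ f := fun p => by simp only [f, Pi.zero_apply]; positivity
  have hrow : ∀ k : ℕ, HasSum (fun n => f (k, n))
      (((k:ℝ)+1)⁻¹^3 * ph (((k:ℝ)+1) * r) / r^2) := by
    intro k
    have := (inner_sum (x := ((k:ℝ)+1)*r) (by positivity)).mul_right ((k:ℝ)+1)⁻¹
    have e1 : (fun n => f (k, n)) = fun n : ℕ =>
        ((n:ℝ)+1) * Real.exp (-(((k:ℝ)+1)*r))^(n+1) * ((k:ℝ)+1)⁻¹ := by
      funext n
      simp only [f]
      rw [div_eq_mul_inv, ← pow_mul, ← Real.exp_nat_mul, ← Real.exp_nat_mul]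
      congr 3
      push_cast; ring
    have e2 : ((k:ℝ)+1)⁻¹^3 * ph (((k:ℝ)+1) * r) / r^2 =
        ph (((k:ℝ)+1) * r) / (((k:ℝ)+1) * r)^2 * ((k:ℝ)+1)⁻¹ := by
      field_simp
    rw [e1, e2]
    exact this
  have hcol : ∀ n : ℕ, HasSum (fun k => f (k, n))
      (((n:ℝ)+1) * (-Real.log (1 - Real.exp (-r)^(n+1)))) := by
    intro n
    have hp := qpow hq0 hq1 n
    have := (Real.hasSum_pow_div_log_of_abs_lt_one (x := Real.exp (-r)^(n+1))
      (by rw [abs_of_pos hp.1]; exact hp.2)).mul_left ((n:ℝ)+1)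
    refine Eq.mp ?_ this
    congr 1
    funext k
    simp only [f]
    rw [mul_div_assoc]
  have hsum : Summable f := by
    rw [summable_prod_of_nonneg hf0]
    refine ⟨fun k => (hrow k).summable, ?_⟩
    simp_rw [fun k => (hrow k).tsum_eq]
    refine Summable.div_const ?_ _
    refine Summable.of_nonneg_of_le (fun k => ?_) (fun k => ?_) zeta_sum
    · have := ph_nonneg (((k:ℝ)+1) * r); positivity
    · exact mul_le_of_le_one_right (by positivity) (ph_le_one (by positivity))
  have h1 : HasSum _ (∑' p, f p) := hsum.hasSum.prod_fiberwise hrow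
  have h2 : HasSum _ (∑' p, f p) :=
    ((Equiv.prodComm ℕ ℕ).hasSum_iff.2 hsum.hasSum).prod_fiberwise (fun n => hcol n)
  refine ⟨h2.summable, ?_⟩
  rw [L, h2.tsum_eq, ← h1.tsum_eq, tsum_div_const]
  field_simp

/-- zeta(3) -/
noncomputable def A : ℝ := ∑' n : ℕ, ((n:ℝ)+1)⁻¹^3

lemma A_nonneg : 0 ≤ A := tsum_nonneg fun n => by positivity

lemma L_tendsto : Tendsto (fun r : ℝ => r^2 * L (Real.exp (-r))) (𝓝[>] 0) (𝓝 A) := by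
  have : Tendsto (fun r : ℝ => ∑' k : ℕ, ((k:ℝ)+1)⁻¹^3 * ph (((k:ℝ)+1) * r)) (𝓝[>] 0) (𝓝 A) := by
    unfold A
    apply tendsto_tsum_of_dominated_convergence zeta_sum
    · intro k
      have : Tendsto (fun r : ℝ => ((k:ℝ)+1) * r) (𝓝[>] 0) (𝓝[>] 0) := by
        rw [tendsto_nhdsWithin_iff]
        constructor
        · have : Continuous (fun r : ℝ => ((k:ℝ)+1) * r) := by fun_prop
          have := (this.tendsto 0).mono_left (nhdsWithin_le_nhds (s := Set.Ioi 0))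
          simpa using this
        · filter_upwards [self_mem_nhdsWithin] with r hr
          have : (0:ℝ) < r := hr
          exact Set.mem_Ioi.2 (by positivity)
      have h := (ph_tendsto.comp this).const_mul (((k:ℝ)+1)⁻¹^3)
      rw [mul_one] at h
      exact h
    · filter_upwards [self_mem_nhdsWithin] with r hr k
      have : (0:ℝ) < r := hr
      rw [Real.norm_eq_abs, abs_of_nonneg (mul_nonneg (by positivity) (ph_nonneg _))]
      exact mul_le_of_le_one_right (by positivity) (ph_le_one (by positivity))
  refine this.congr' ?_
  filter_upwards [self_mem_nhdsWithin] with r hr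
  exact (L_main hr).2.symm

/-- the exponential bound -/
noncomputable def T (ε δ r : ℝ) : ℝ :=
  Real.exp (-L (Real.exp (-r)) + L (Real.exp (-((1-δ)*r))) - (2*A*δ + |δ| * ε) / r^2)

lemma T_tendsto {ε δ : ℝ} (hδ : δ < 1)
    (hneg : -A + A/(1-δ)^2 - (2*A*δ + |δ| * ε) < 0) :
    Tendsto (T ε δ) (𝓝[>] 0) (𝓝 0) := by
  have hδ' : 0 < 1 - δ := by linarith
  have h0 : Tendsto (fun r : ℝ => (1-δ) * r) (𝓝[>] 0) (𝓝[>] 0) := by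
    rw [tendsto_nhdsWithin_iff]
    constructor
    · have : Continuous (fun r : ℝ => (1-δ) * r) := by fun_prop
      have := (this.tendsto 0).mono_left (nhdsWithin_le_nhds (s := Set.Ioi 0))
      simpa using this
    · filter_upwards [self_mem_nhdsWithin] with r hr
      have : (0:ℝ) < r := hr
      exact Set.mem_Ioi.2 (by positivity)
  have h1 := (L_tendsto.comp h0).div_const ((1-δ)^2)
  have h2 := (L_tendsto.neg.add h1).sub_const (2*A*δ + |δ| * ε)
  have h3 : Tendsto (fun r : ℝ => (r^2)⁻¹) (𝓝[>] 0) atTop := by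
    have := (tendsto_inv_nhdsGT_zero (𝕜 := ℝ))
    have := (tendsto_pow_atTop (n := 2) (by norm_num)).comp this
    refine this.congr fun r => ?_
    simp
  have h4 := h3.atTop_mul_neg hneg h2
  refine (Real.tendsto_exp_atBot.comp h4).congr' ?_
  filter_upwards [self_mem_nhdsWithin] with r hr
  have : r ≠ 0 := ne_of_gt hr
  simp only [Function.comp, T]
  congr 1
  field_simp

lemma prob_bound {ε δ r : ℝ} (hr : 0 < r) (hδ0 : 0 < δ) (hδ1 : δ < 1) :
    ∑' π : PlanePartition, (if ε < |r^3 * (π.size : ℝ) - 2 * A| then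
      Real.exp (-r) ^ π.size * Real.exp (-L (Real.exp (-r))) else 0) ≤ T ε δ r + T ε (-δ) r := by
  have hz : ∀ s : ℝ, 0 < s → Summable (fun π : PlanePartition => Real.exp (-s) ^ π.size) ∧
      ∑' π : PlanePartition, Real.exp (-s) ^ π.size ≤ Real.exp (L (Real.exp (-s))) := by
    intro s hs
    exact Z_le (Real.exp_pos _) (by rw [Real.exp_lt_one_iff]; linarith) (L_main hs).1
  have s1 := hz ((1-δ)*r) (mul_pos (by linarith) hr)
  have s2 := hz ((1-(-δ))*r) (mul_pos (by linarith) hr)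
  let c : ℝ → ℝ := fun d => Real.exp (-L (Real.exp (-r)) - (2*A*d + |d| * ε)/r^2)
  have hT : ∀ d, T ε d r = c d * Real.exp (L (Real.exp (-((1-d)*r)))) := by
    intro d
    simp only [c, T]
    rw [← Real.exp_add]; congr 1; ring
  have hid : ∀ (d : ℝ) (n : ℕ), c d * Real.exp (-((1-d)*r))^n =
      Real.exp (-r)^n * Real.exp (-L (Real.exp (-r))) *
        Real.exp ((d * (r^3 * n - 2*A) - |d| * ε)/r^2) := by
    intro d n
    simp only [c]
    rw [← Real.exp_nat_mul, ← Real.exp_nat_mul, ← Real.exp_add, ← Real.exp_add, ← Real.exp_add]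
    congr 1
    field_simp
    ring
  have hs := (s1.1.mul_left (c δ)).add (s2.1.mul_left (c (-δ)))
  have hpt : ∀ π : PlanePartition, (if ε < |r^3 * (π.size : ℝ) - 2 * A| then
      Real.exp (-r) ^ π.size * Real.exp (-L (Real.exp (-r))) else 0) ≤
      c δ * Real.exp (-((1-δ)*r))^π.size + c (-δ) * Real.exp (-((1-(-δ))*r))^π.size := by
    intro π
    have p1 : 0 ≤ c δ * Real.exp (-((1-δ)*r))^π.size := by simp only [c]; positivity
    have p2 : 0 ≤ c (-δ) * Real.exp (-((1-(-δ))*r))^π.size := by simp only [c]; positivity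
    split_ifs with h
    · rcases lt_abs.1 h with h | h
      · refine le_trans ?_ (le_add_of_nonneg_right p2)
        rw [hid]
        apply le_mul_of_one_le_right (by positivity)
        apply Real.one_le_exp
        rw [abs_of_pos hδ0]
        apply div_nonneg _ (by positivity)
        nlinarith
      · refine le_trans ?_ (le_add_of_nonneg_left p1)
        rw [hid]
        apply le_mul_of_one_le_right (by positivity)
        apply Real.one_le_exp
        rw [abs_neg, abs_of_pos hδ0]
        apply div_nonneg _ (by positivity)
        nlinarith
    · linarith
  have hs0 := Summable.of_nonneg_of_le (fun π => by split_ifs <;> positivity) hpt hs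
  refine le_trans (hs0.tsum_le_tsum hpt hs) ?_
  rw [(s1.1.mul_left (c δ)).tsum_add (s2.1.mul_left (c (-δ))), tsum_mul_left, tsum_mul_left,
    hT, hT]
  have c0 : ∀ d, 0 ≤ c d := fun d => (Real.exp_pos _).le
  exact add_le_add (mul_le_mul_of_nonneg_left s1.2 (c0 _)) (mul_le_mul_of_nonneg_left s2.2 (c0 _))

lemma delta_ok {ε d : ℝ} (hd0 : d ≠ 0) (hd : |d| ≤ 1/2) (h : 16 * A * |d| < ε) :
    -A + A/(1-d)^2 - (2*A*d + |d| * ε) < 0 := by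
  have hb := abs_le.1 hd
  have hp : 0 < |d| := abs_pos.2 hd0
  have hA := A_nonneg
  have h1 : 1/4 ≤ (1-d)^2 := by nlinarith
  have h2 : A/(1-d)^2 - A - 2*A*d ≤ 16 * A * d^2 := by
    rw [sub_sub, sub_le_iff_le_add, div_le_iff₀ (by linarith)]
    have : 1 ≤ (16 * d^2 + (1 + 2*d)) * (1-d)^2 := by
      nlinarith [sq_nonneg d, mul_nonneg (sq_nonneg d) (by linarith : (0:ℝ) ≤ (1-d)^2 - 1/4),
        mul_nonneg (sq_nonneg d) (by linarith : (0:ℝ) ≤ 1/2 + d)]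
    nlinarith
  have h3 : 16 * A * d^2 < |d| * ε := by
    rw [← sq_abs]; nlinarith
  linarith

end PPaux

/-- As `q → 1⁻`, `(-ln q)³ |π| → 2ζ(3)` in probability under `P_3D,q`: for
every `ε > 0`, the `P_3D,q`-probability of `|(-ln q)³ |π| - 2ζ(3)| > ε` tends
to `0`. -/
theorem volume_times_r_cubed_tendsto_two_zeta_three_in_probability
    (ε : ℝ) (hε : 0 < ε) :
    Tendsto
      (fun q : ℝ =>
        ∑' π : PlanePartition,
          if ε < |(-Real.log q) ^ 3 * (π.size : ℝ) -
              2 * ∑' n : ℕ, ((n : ℝ) + 1)⁻¹ ^ 3|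
          then q ^ π.size * ∏' n : ℕ, (1 - q ^ (n + 1)) ^ (n + 1) else 0)
      (𝓝[<] 1) (𝓝 0) := by
  have hA := PPaux.A_nonneg
  obtain ⟨δ, hδ0, hδ1, hδ2⟩ : ∃ δ : ℝ, 0 < δ ∧ δ ≤ 1/2 ∧ 16 * PPaux.A * δ < ε := by
    have hp : 0 < ε / (16 * PPaux.A + 1) := by positivity
    refine ⟨min (1/2) (ε / (16 * PPaux.A + 1)), lt_min (by norm_num) hp, min_le_left _ _, ?_⟩
    have h1 := min_le_right (1/2) (ε / (16 * PPaux.A + 1))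
    have h0 : 0 < min (1/2) (ε / (16 * PPaux.A + 1)) := lt_min (by norm_num) hp
    rw [le_div_iff₀ (by positivity)] at h1
    nlinarith
  have t1 := PPaux.T_tendsto (ε := ε) (δ := δ) (by linarith)
    (PPaux.delta_ok hδ0.ne' (by rwa [abs_of_pos hδ0]) (by rwa [abs_of_pos hδ0]))
  have t2 := PPaux.T_tendsto (ε := ε) (δ := -δ) (by linarith)
    (PPaux.delta_ok (neg_ne_zero.2 hδ0.ne') (by rwa [abs_neg, abs_of_pos hδ0])
      (by rwa [abs_neg, abs_of_pos hδ0]))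
  have hlog : Tendsto (fun q : ℝ => -Real.log q) (𝓝[<] 1) (𝓝[>] 0) := by
    rw [tendsto_nhdsWithin_iff]
    constructor
    · have := (Real.continuousAt_log (x := 1) one_ne_zero).tendsto.neg.mono_left
        (nhdsWithin_le_nhds (s := Set.Iio 1))
      simpa using this
    · filter_upwards [Ioo_mem_nhdsLT (show (0:ℝ) < 1 by norm_num)] with q hq
      have := Real.log_neg hq.1 hq.2
      exact Set.mem_Ioi.2 (by linarith)
  have t3 := (t1.add t2).comp hlog
  rw [add_zero] at t3
  refine tendsto_of_tendsto_of_tendsto_of_le_of_le' tendsto_const_nhds t3 ?_ ?_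
  all_goals
    filter_upwards [Ioo_mem_nhdsLT (show (0:ℝ) < 1 by norm_num)] with q hq
    have hl : 0 < -Real.log q := by have := Real.log_neg hq.1 hq.2; linarith
    have hqe : Real.exp (-(-Real.log q)) = q := by rw [neg_neg, Real.exp_log hq.1]
    have hs := (PPaux.L_main hl).1
    rw [hqe] at hs
    rw [PPaux.prod_eq hq.1 hq.2 hs]
  · have := hq.1
    exact tsum_nonneg fun π => by split_ifs <;> positivity
  · have := PPaux.prob_bound (ε := ε) hl hδ0 (by linarith : δ < 1)
    rw [hqe] at this
    exact this
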